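/- arXiv:2511.23297 — 4 statements merged into one kernel-verified Lean document; each statement's English description precedes it below -/
import Mathlib

section
/- Let G be a finite tree whose diameter equals 2r' for some r' ∈ ℕ (even diameter). Then the last layer index r of the leaf-peeling process equals r', the layer V_r is a singleton {l}, the eccentricity of l in G equals r, and every vertex v ≠ l has eccentricity at least r + 1 in G. -/
variable {V : Type*} [Fintype V] [DecidableEq V]

def remaining (G : SimpleGraph V) [DecidableRel G.Adj] : ℕ → Finset V
  | 0 => Finset.univ
  | i + 1 => (remaining G i).filter fun v =>
      1 < ((remaining G i).filter fun u => G.Adj v u).card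

def layer (G : SimpleGraph V) [DecidableRel G.Adj] (i : ℕ) : Finset V :=
  (remaining G i).filter fun v =>
    ((remaining G i).filter fun u => G.Adj v u).card ≤ 1

/-- `r` is the largest index with `V_r` nonempty. -/
def IsLastIndex (G : SimpleGraph V) [DecidableRel G.Adj] (r : ℕ) : Prop :=
  (layer G r).Nonempty ∧ ∀ i, r < i → layer G i = ∅

/-- Eccentricity of a vertex: the maximum graph distance to another vertex. -/
noncomputable def ecc (G : SimpleGraph V) (v : V) : ℕ :=
  Finset.univ.sup fun u => G.dist v u

/-- Diameter: the maximum eccentricity. -/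
noncomputable def diam (G : SimpleGraph V) : ℕ :=
  Finset.univ.sup fun v => ecc G v

theorem tree_mid (G : SimpleGraph V) (hG : G.IsTree) (a b m w : V)
    (h : G.dist a m + G.dist m b = G.dist a b) :
    G.dist w a = G.dist w m + G.dist m a ∨ G.dist w b = G.dist w m + G.dist m b := by
  have hc := hG.connected
  have through : ∀ (x : V) (p : G.Walk w x), p.length = G.dist w x → m ∈ p.support →
      G.dist w x = G.dist w m + G.dist m x := by
    intro x p hp hm
    have h1 := SimpleGraph.dist_le (p.takeUntil m hm)
    have h2 := SimpleGraph.dist_le (p.dropUntil m hm)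
    have h3 := congrArg SimpleGraph.Walk.length (p.take_spec hm)
    rw [SimpleGraph.Walk.length_append] at h3
    have h4 := hc.dist_triangle (u := w) (v := m) (w := x)
    omega
  obtain ⟨p, hp⟩ := hc.exists_walk_length_eq_dist w a
  obtain ⟨q, hq⟩ := hc.exists_walk_length_eq_dist w b
  obtain ⟨s, hs⟩ := hc.exists_walk_length_eq_dist a m
  obtain ⟨t, ht⟩ := hc.exists_walk_length_eq_dist m b
  have hpath : (s.append t).IsPath := by
    apply SimpleGraph.Walk.isPath_of_length_eq_dist
    rw [SimpleGraph.Walk.length_append]; omega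
  have huniq : s.append t = (p.reverse.append q).bypass :=
    (hG.existsUnique_path a b).unique hpath (SimpleGraph.Walk.bypass_isPath _)
  have hm : m ∈ (s.append t).support := by
    rw [SimpleGraph.Walk.mem_support_append_iff]
    exact Or.inl s.end_mem_support
  rw [huniq] at hm
  have hm2 := SimpleGraph.Walk.support_bypass_subset_support _ hm
  rw [SimpleGraph.Walk.mem_support_append_iff, SimpleGraph.Walk.support_reverse,
    List.mem_reverse] at hm2
  rcases hm2 with h1 | h1
  · exact Or.inl (through a p hp h1)
  · exact Or.inr (through b q hq h1)

theorem exists_closer (G : SimpleGraph V) (hG : G.IsTree) (a v : V) (h : 0 < G.dist a v) :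
    ∃ u, G.Adj v u ∧ G.dist a u + 1 = G.dist a v := by
  have hc := hG.connected
  obtain ⟨p, hp⟩ := hc.exists_walk_length_eq_dist v a
  rw [SimpleGraph.dist_comm] at hp
  cases p with
  | nil => simp at h
  | @cons _ u _ hadj q =>
    refine ⟨u, hadj, ?_⟩
    have h1 := SimpleGraph.dist_le q
    rw [SimpleGraph.dist_comm] at h1
    rw [SimpleGraph.Walk.length_cons] at hp
    rcases hG.dist_eq_dist_add_one_of_adj a hadj with h2 | h2 <;> omega

theorem closer_unique (G : SimpleGraph V) (hG : G.IsTree) (l v x y : V)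
    (hx : G.Adj v x) (hy : G.Adj v y) (hdx : G.dist l x + 1 = G.dist l v)
    (hdy : G.dist l y + 1 = G.dist l v) : x = y := by
  have hc := hG.connected
  have h1 : G.dist x v = 1 := SimpleGraph.dist_eq_one_iff_adj.mpr hx.symm
  have h2 : G.dist y v = 1 := SimpleGraph.dist_eq_one_iff_adj.mpr hy.symm
  have h3 := tree_mid G hG l v x y (by omega)
  have h4 : G.dist y l = G.dist l y := SimpleGraph.dist_comm
  have h5 : G.dist x l = G.dist l x := SimpleGraph.dist_comm
  have h6 : G.dist y x = 0 := by omega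
  exact (hc.dist_eq_zero_iff.mp h6).symm

theorem mem_remaining_of_between (G : SimpleGraph V) [DecidableRel G.Adj] (hG : G.IsTree)
    (a b : V) (i : ℕ) : ∀ v, G.dist a v + G.dist v b = G.dist a b →
      i ≤ G.dist a v → i ≤ G.dist v b → v ∈ remaining G i := by
  have hc := hG.connected
  induction i with
  | zero => intro v _ _ _; simp [remaining]
  | succ i ih =>
    intro v hv ha hb
    have hbv : G.dist b v = G.dist v b := SimpleGraph.dist_comm
    obtain ⟨x, hx, hdx⟩ := exists_closer G hG a v (by omega)
    obtain ⟨y, hy, hdy⟩ := exists_closer G hG b v (by omega)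
    have hbx : G.dist b x = G.dist x b := SimpleGraph.dist_comm
    have hby : G.dist b y = G.dist y b := SimpleGraph.dist_comm
    have t1 := hc.dist_triangle (u := a) (v := x) (w := b)
    have t2 := hc.dist_triangle (u := a) (v := y) (w := b)
    have e1 := hG.dist_eq_dist_add_one_of_adj b hx
    have e2 := hG.dist_eq_dist_add_one_of_adj a hy
    rw [remaining, Finset.mem_filter]
    refine ⟨ih v hv (by omega) (by omega), ?_⟩
    rw [Finset.one_lt_card]
    refine ⟨x, ?_, y, ?_, ?_⟩
    · exact Finset.mem_filter.mpr ⟨ih x (by omega) (by omega) (by omega), hx⟩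
    · exact Finset.mem_filter.mpr ⟨ih y (by omega) (by omega) (by omega), hy⟩
    · rintro rfl
      omega

theorem remaining_bound (G : SimpleGraph V) [DecidableRel G.Adj] (hG : G.IsTree)
    (l : V) (R : ℕ) (hR : ∀ w, G.dist l w ≤ R) (i : ℕ) :
    ∀ v, v ≠ l → v ∈ remaining G i → i + G.dist l v ≤ R := by
  have hc := hG.connected
  induction i with
  | zero => intro v _ _; simpa using hR v
  | succ i ih =>
    intro v hvl hv
    rw [remaining, Finset.mem_filter, Finset.one_lt_card] at hv
    obtain ⟨-, x, hx, y, hy, hxy⟩ := hv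
    rw [Finset.mem_filter] at hx hy
    have far : ∀ u, u ∈ remaining G i → G.dist l u = G.dist l v + 1 →
        i + 1 + G.dist l v ≤ R := by
      intro u hu hd
      have := ih u (by rintro rfl; simp at hd) hu
      omega
    rcases hG.dist_eq_dist_add_one_of_adj l hx.2 with h1 | h1
    · rcases hG.dist_eq_dist_add_one_of_adj l hy.2 with h2 | h2
      · exact absurd (closer_unique G hG l v x y hx.2 hy.2 h1.symm h2.symm) hxy
      · exact far y hy.1 h2
    · exact far x hx.1 h1

/-- If a finite tree has even diameter `2r'`, then the last
layer index `r` of the leaf-peeling process equals `r'`, the last layer is a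
singleton `{l}`, the eccentricity of `l` is `r`, and every other vertex has
eccentricity at least `r + 1`. -/
theorem even_diameter_center (G : SimpleGraph V) [DecidableRel G.Adj]
    [Nonempty V] (hG : G.IsTree) (r' : ℕ) (hdiam : diam G = 2 * r')
    (r : ℕ) (hr : IsLastIndex G r) :
    r = r' ∧ ∃ l : V, layer G r = {l} ∧ ecc G l = r ∧
      ∀ v : V, v ≠ l → r + 1 ≤ ecc G v := by
  have hc := hG.connected
  have hecc : ∀ v u, G.dist v u ≤ ecc G v := fun v u =>
    Finset.le_sup (f := fun u => G.dist v u) (Finset.mem_univ u)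
  have hle : ∀ v u, G.dist v u ≤ 2 * r' := fun v u =>
    hdiam ▸ (hecc v u).trans (Finset.le_sup (f := fun v => ecc G v) (Finset.mem_univ v))
  obtain ⟨a, -, ha⟩ := Finset.exists_mem_eq_sup Finset.univ Finset.univ_nonempty
    (fun v => ecc G v)
  obtain ⟨b, -, hb⟩ := Finset.exists_mem_eq_sup Finset.univ Finset.univ_nonempty
    (fun u => G.dist a u)
  have hab : G.dist a b = 2 * r' := by
    rw [← hdiam]; exact (ha.trans hb).symm
  obtain ⟨l, hal, hlb⟩ : ∃ l, G.dist a l = r' ∧ G.dist l b = r' := by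
    obtain ⟨p, hp⟩ := hc.exists_walk_length_eq_dist a b
    refine ⟨p.getVert r', ?_⟩
    have h1 := SimpleGraph.dist_le (p.take r')
    have h2 := SimpleGraph.dist_le (p.drop r')
    rw [SimpleGraph.Walk.take_length] at h1
    rw [SimpleGraph.Walk.drop_length] at h2
    have h3 := hc.dist_triangle (u := a) (v := p.getVert r') (w := b)
    omega
  have hla : G.dist l a = r' := by rw [SimpleGraph.dist_comm]; exact hal
  have key : ∀ w, G.dist w l + r' ≤ ecc G w ∧ G.dist w l + r' ≤ 2 * r' := by
    intro w
    rcases tree_mid G hG a b l w (by omega) with h | h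
    · have := hecc w a; have := hle w a; omega
    · have := hecc w b; have := hle w b; omega
  have hR : ∀ w, G.dist l w ≤ r' := by
    intro w
    have := (key w).2
    rw [SimpleGraph.dist_comm]; omega
  have hbound := remaining_bound G hG l r' hR
  have hlrem : l ∈ remaining G r' :=
    mem_remaining_of_between G hG a b r' l (by omega) (by omega) (by omega)
  have hrem : remaining G r' = {l} := by
    ext v
    rw [Finset.mem_singleton]
    constructor
    · intro hv
      by_contra hne
      have h1 := hbound r' v hne hv
      have h2 := hc.pos_dist_of_ne (Ne.symm hne)
      omega
    · rintro rfl; exact hlrem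
  have hlay : layer G r' = {l} := by
    rw [layer, hrem, Finset.filter_eq_self]
    intro v _
    exact (Finset.card_filter_le _ _).trans (by simp)
  have hnext : remaining G (r' + 1) = ∅ := by
    rw [remaining, hrem, Finset.filter_eq_empty_iff]
    intro v _
    rw [not_lt]
    exact (Finset.card_filter_le _ _).trans (by simp)
  have hempty : ∀ k, remaining G (r' + 1 + k) = ∅ := by
    intro k
    induction k with
    | zero => exact hnext
    | succ k ih => rw [← Nat.add_assoc, remaining, ih, Finset.filter_empty]
  have hrr : r = r' := by
    rcases lt_trichotomy r r' with h | h | h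
    · have := hr.2 r' h
      rw [hlay] at this
      simp at this
    · exact h
    · obtain ⟨k, rfl⟩ := Nat.exists_eq_add_of_lt h
      have := hr.1
      rw [layer, show r' + k + 1 = r' + 1 + k by omega, hempty] at this
      simp at this
  subst hrr
  refine ⟨rfl, l, hlay, le_antisymm (Finset.sup_le fun u _ => hR u) ?_, ?_⟩
  · rw [← hla]; exact hecc l a
  · intro v hv
    have h1 := (key v).1
    have h2 := hc.pos_dist_of_ne hv
    omega
end

section
/- Let G be a finite tree with layers V_0, …, V_r. For every i ∈ {0, …, r} and every vertex v ∈ V_i, the subtree T^v rooted at v has height exactly i; that is, the maximum distance in T^v from v to a vertex of T^v equals i. -/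
variable {V : Type*} [Fintype V] [DecidableEq V]

/-- The vertex set `{v} ∪ V_0 ∪ … ∪ V_{i-1}`; for `v ∈ V_i`, the subtree
`T^v` rooted at `v` is the connected component of `v` in the subgraph of `G`
induced on this set. -/
def subSet (G : SimpleGraph V) [DecidableRel G.Adj] (i : ℕ) (v : V) : Set V :=
  insert v {u | ∃ j, j < i ∧ u ∈ layer G j}

theorem remaining_anti (G : SimpleGraph V) [DecidableRel G.Adj] {j i : ℕ} (h : j ≤ i) :
    remaining G i ⊆ remaining G j := by
  induction i, h using Nat.le_induction with
  | base => exact Finset.Subset.refl _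
  | succ n hn ih => exact (Finset.filter_subset _ _).trans ih

theorem layer_sub (G : SimpleGraph V) [DecidableRel G.Adj] (i : ℕ) :
    layer G i ⊆ remaining G i := Finset.filter_subset _ _

theorem mem_layer_of_not_succ (G : SimpleGraph V) [DecidableRel G.Adj] {i : ℕ} {v : V}
    (h : v ∈ remaining G i) (h' : v ∉ remaining G (i+1)) : v ∈ layer G i := by
  simp only [remaining, layer, Finset.mem_filter, h, true_and, not_lt] at *
  exact h'

theorem not_mem_remaining_succ (G : SimpleGraph V) [DecidableRel G.Adj] {i : ℕ} {v : V}
    (h : v ∈ layer G i) : v ∉ remaining G (i+1) := by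
  intro h'
  have h1 := (Finset.mem_filter.1 h).2
  have h2 := (Finset.mem_filter.1 h').2
  omega

theorem exists_layer (G : SimpleGraph V) [DecidableRel G.Adj] {i : ℕ} {v : V}
    (h : v ∉ remaining G i) : ∃ k, k < i ∧ v ∈ layer G k := by
  induction i with
  | zero => exact absurd (Finset.mem_univ v) h
  | succ n ih =>
    by_cases hn : v ∈ remaining G n
    · exact ⟨n, by omega, mem_layer_of_not_succ G hn h⟩
    · obtain ⟨k, hk, hk'⟩ := ih hn
      exact ⟨k, by omega, hk'⟩

theorem layer_unique (G : SimpleGraph V) [DecidableRel G.Adj] {i : ℕ} {v a b : V}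
    (h : v ∈ layer G i) (ha : a ∈ remaining G i) (hb : b ∈ remaining G i)
    (hva : G.Adj v a) (hvb : G.Adj v b) : a = b :=
  Finset.card_le_one.1 (Finset.mem_filter.1 h).2 a (Finset.mem_filter.2 ⟨ha, hva⟩) b
    (Finset.mem_filter.2 ⟨hb, hvb⟩)

theorem path_bound (G : SimpleGraph V) [DecidableRel G.Adj] {x y : V} (p : G.Walk x y)
    (hp : p.IsPath) : ∀ (j : ℕ) (a : V), x ∈ layer G j → G.Adj x a → a ∈ remaining G j →
      a ∉ p.support → p.length ≤ j := by
  induction p with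
  | nil => intros; simp
  | @cons x w y h q ih =>
    intro j a hx hxa ha hap
    rw [SimpleGraph.Walk.cons_isPath_iff] at hp
    have hw : w ∉ remaining G j := by
      intro hw
      have := layer_unique G hx ha hw hxa h
      subst this
      exact hap (by simp)
    obtain ⟨k, hk, hwk⟩ := exists_layer G hw
    have := ih hp.1 k x hwk h.symm (remaining_anti G hk.le (layer_sub G j hx)) hp.2
    simp only [SimpleGraph.Walk.length_cons]
    omega

theorem exists_down (G : SimpleGraph V) [DecidableRel G.Adj] (i : ℕ) : ∀ v ∈ layer G i,
    ∃ (u : V) (p : G.Walk v u), p.IsPath ∧ p.length = i ∧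
      ∀ z ∈ p.support, z ∈ subSet G i v := by
  induction i with
  | zero =>
    intro v _
    exact ⟨v, .nil, by simp, by simp, by simp [subSet]⟩
  | succ n ih =>
    intro v hv
    have h1 := (Finset.mem_filter.1 (layer_sub G _ hv)).2
    obtain ⟨a, ha, b, hb, hab⟩ := Finset.one_lt_card.1 h1
    rw [Finset.mem_filter] at ha hb
    obtain ⟨w, hw, hvw⟩ : ∃ w, w ∈ layer G n ∧ G.Adj v w := by
      by_cases ha' : a ∈ remaining G (n+1)
      · by_cases hb' : b ∈ remaining G (n+1)
        · exact absurd (layer_unique G hv ha' hb' ha.2 hb.2) hab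
        · exact ⟨b, mem_layer_of_not_succ G hb.1 hb', hb.2⟩
      · exact ⟨a, mem_layer_of_not_succ G ha.1 ha', ha.2⟩
    obtain ⟨u, q, hq, hl, hs⟩ := ih w hw
    have key : ∀ z ∈ q.support, ∃ j, j < n + 1 ∧ z ∈ layer G j := by
      intro z hz
      rcases hs z hz with rfl | ⟨j, hj, hz'⟩
      · exact ⟨n, by omega, hw⟩
      · exact ⟨j, by omega, hz'⟩
    refine ⟨u, .cons hvw q, ?_, by simp [hl], ?_⟩
    · rw [SimpleGraph.Walk.cons_isPath_iff]
      refine ⟨hq, fun hvq => ?_⟩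
      obtain ⟨j, hj, hz⟩ := key v hvq
      exact not_mem_remaining_succ G hz (remaining_anti G hj (layer_sub G _ hv))
    · intro z hz
      rw [SimpleGraph.Walk.support_cons, List.mem_cons] at hz
      rcases hz with rfl | hz
      · exact Set.mem_insert _ _
      · exact Or.inr (key z hz)

/-- For `v ∈ V_i`, the subtree `T^v` rooted at `v` has
height exactly `i`: the maximum distance (within the connected component of
`v` in the induced subgraph on `{v} ∪ V_0 ∪ … ∪ V_{i-1}`) from `v` equals
`i`. -/
theorem subtree_height (G : SimpleGraph V) [DecidableRel G.Adj]
    [Nonempty V] (hG : G.IsTree) (r : ℕ) (hr : IsLastIndex G r) :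
    ∀ i ≤ r, ∀ v ∈ layer G i,
      (∀ u : subSet G i v,
        (G.induce (subSet G i v)).Reachable ⟨v, Set.mem_insert v _⟩ u →
          (G.induce (subSet G i v)).dist ⟨v, Set.mem_insert v _⟩ u ≤ i) ∧
      (∃ u : subSet G i v,
        (G.induce (subSet G i v)).Reachable ⟨v, Set.mem_insert v _⟩ u ∧
          (G.induce (subSet G i v)).dist ⟨v, Set.mem_insert v _⟩ u = i) := by
  classical
  intro i _ v hv
  constructor
  · intro u hu
    obtain ⟨p, hp, hl⟩ := hu.exists_path_of_dist
    rw [← hl]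
    cases p with
    | nil => simp
    | @cons _ w _ h q =>
      rw [SimpleGraph.Walk.cons_isPath_iff] at hp
      have hadj : G.Adj v w.1 := h
      obtain ⟨k, hk, hwk⟩ : ∃ k, k < i ∧ w.1 ∈ layer G k := by
        rcases w.2 with hwv | hw
        · exact absurd (hwv ▸ hadj) (G.irrefl)
        · exact hw
      let f := (SimpleGraph.Embedding.induce (G := G) (subSet G i v))
      have hb := path_bound G (q.map f.toHom)
        (SimpleGraph.Walk.map_isPath_of_injective f.injective hp.1) k v hwk hadj.symm
        (remaining_anti G hk.le (layer_sub G i hv)) (by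
          rw [SimpleGraph.Walk.support_map, List.mem_map]
          rintro ⟨z, hz, hzv⟩
          have : z = ⟨v, Set.mem_insert v _⟩ := Subtype.ext hzv
          exact hp.2 (this ▸ hz))
      rw [SimpleGraph.Walk.length_map] at hb
      simp only [SimpleGraph.Walk.length_cons]
      omega
  · obtain ⟨u, p, hp, hl, hs⟩ := exists_down G i v hv
    refine ⟨⟨u, hs u p.end_mem_support⟩, ⟨p.induce _ hs⟩, ?_⟩
    have hreach : (G.induce (subSet G i v)).Reachable ⟨v, Set.mem_insert v _⟩
      ⟨u, hs u p.end_mem_support⟩ := ⟨p.induce _ hs⟩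
    obtain ⟨q, hq, hql⟩ := hreach.exists_path_of_dist
    let f := (SimpleGraph.Embedding.induce (G := G) (subSet G i v))
    have hqm : (q.map f.toHom).IsPath :=
      SimpleGraph.Walk.map_isPath_of_injective f.injective hq
    have := congrArg (fun x => x.1.length)
      (hG.isAcyclic.path_unique ⟨_, hqm⟩ ⟨p, hp⟩)
    simp only [SimpleGraph.Walk.length_map] at this
    have h3 : q.length = p.length := this
    omega
end

section
/- Let G be a finite tree with odd diameter, and let V_0, …, V_r be its layers with V_r = {l_1, l_2}. Then e = {l_1, l_2} is an edge of G, and G − e has exactly two connected components, whose vertex sets are the vertex sets of T^{l_1} and T^{l_2} respectively. Consequently, if G is not symmetric about any edge, then there is no graph isomorphism f from the component of l_1 in G − e to the component of l_2 in G − e with f(l_1) = l_2; in particular, T^{l_1} and T^{l_2} are not isomorphic as rooted trees. -/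
variable {V : Type*} [Fintype V] [DecidableEq V]

/-- `a` and `b` both belong to `S` and are connected inside the subgraph of
`G` induced on `S`. -/
def reachIn (G : SimpleGraph V) (S : Set V) (a b : V) : Prop :=
  ∃ (ha : a ∈ S) (hb : b ∈ S), (G.induce S).Reachable ⟨a, ha⟩ ⟨b, hb⟩

/-- The vertex set of the subtree `T^v` rooted at `v ∈ V_i`. -/
def subtreeVerts (G : SimpleGraph V) [DecidableRel G.Adj] (i : ℕ) (v : V) :
    Set V :=
  {u | reachIn G (subSet G i v) v u}

/-- `G` is symmetric about the edge `{u, v}`: `G - e` has exactly two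
connected components, containing `u` and `v` respectively, and there is a
graph isomorphism between them sending `u` to `v`. -/
def SymmetricAboutEdge (G : SimpleGraph V) : Prop :=
  ∃ u v : V, G.Adj u v ∧
    ¬ (G.deleteEdges {s(u, v)}).Reachable u v ∧
    (∀ w : V, (G.deleteEdges {s(u, v)}).Reachable w u ∨
      (G.deleteEdges {s(u, v)}).Reachable w v) ∧
    ∃ φ : G.induce {w | (G.deleteEdges {s(u, v)}).Reachable w u} ≃g
          G.induce {w | (G.deleteEdges {s(u, v)}).Reachable w v},
      (φ ⟨u, SimpleGraph.Reachable.refl u⟩ : V) = v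

theorem aux_empty (G : SimpleGraph V) [DecidableRel G.Adj] (hG : G.IsTree) (S : Finset V)
    (h : ∀ v ∈ S, 1 < (S.filter fun u => G.Adj v u).card) : S = ∅ := by
  by_contra hS
  obtain ⟨a, ha⟩ := Finset.nonempty_iff_ne_empty.mpr hS
  obtain ⟨v, hv, hmax⟩ := S.exists_max_image (fun x => G.dist a x) ⟨a, ha⟩
  obtain ⟨x, hx, y, hy, hxy⟩ := Finset.one_lt_card.mp (h v hv)
  obtain ⟨p, hp, -⟩ := hG.existsUnique_path a v
  have key : ∀ z ∈ S.filter (fun u => G.Adj v u), z = p.penultimate := by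
    intro z hz
    rw [Finset.mem_filter] at hz
    apply hG.isAcyclic.eq_penultimate_of_adj_end hp hz.2
    obtain ⟨q, hq, hql⟩ := hG.connected.exists_path_of_dist a z
    apply hG.isAcyclic.mem_support_of_ne_mem_support_of_adj_of_isPath hp hq hz.2
    intro hmem
    have h1 := hmax z hz.1
    have h2 := hG.dist_ne_of_adj a hz.2
    have h3 : G.dist a v ≤ (q.takeUntil v hmem).length := SimpleGraph.dist_le _
    have h4 := q.length_takeUntil_le_length hmem
    omega
  exact hxy ((key x hx).trans (key y hy).symm)

theorem aux_path (G : SimpleGraph V) [DecidableRel G.Adj] (i : ℕ) :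
    ∀ a ∈ remaining G i, ∀ b ∈ remaining G i, ∀ p : G.Walk a b, p.IsPath →
      ∀ x ∈ p.support, x ∈ remaining G i := by
  induction i with
  | zero => intros; simp [remaining]
  | succ i ih =>
    intro a ha b hb p hp x hx
    have ha' := ha
    have hb' := hb
    rw [remaining, Finset.mem_filter] at ha' hb'
    have ih' := ih a ha'.1 b hb'.1 p hp
    by_cases hxa : x = a
    · rwa [hxa]
    by_cases hxb : x = b
    · rwa [hxb]
    rw [remaining, Finset.mem_filter]
    refine ⟨ih' x hx, ?_⟩
    obtain ⟨n, rfl, hn⟩ := SimpleGraph.Walk.mem_support_iff_exists_getVert.mp hx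
    have hn0 : n ≠ 0 := by
      rintro rfl
      exact hxa p.getVert_zero
    have hnl : n ≠ p.length := by
      rintro rfl
      exact hxb p.getVert_length
    obtain ⟨m, rfl⟩ := Nat.exists_eq_succ_of_ne_zero hn0
    rw [Finset.one_lt_card]
    refine ⟨p.getVert m, ?_, p.getVert (m+2), ?_, ?_⟩
    · rw [Finset.mem_filter]
      exact ⟨ih' _ (p.getVert_mem_support _), (p.adj_getVert_succ (by omega)).symm⟩
    · rw [Finset.mem_filter]
      exact ⟨ih' _ (p.getVert_mem_support _), p.adj_getVert_succ (by omega)⟩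
    · intro h
      have := hp.getVert_injOn (by simp; omega) (by simp; omega) h
      omega

theorem aux_mem (G : SimpleGraph V) [DecidableRel G.Adj] (i : ℕ) (v : V) :
    v ∉ remaining G i ↔ ∃ j, j < i ∧ v ∈ layer G j := by
  induction i with
  | zero => simp [remaining]
  | succ i ih =>
    have : v ∉ remaining G (i+1) ↔ v ∉ remaining G i ∨ v ∈ layer G i := by
      simp only [remaining, layer, Finset.mem_filter, not_and, not_lt]
      tauto
    rw [this, ih]
    constructor
    · rintro (⟨j, hj, h⟩ | h)
      · exact ⟨j, by omega, h⟩
      · exact ⟨i, by omega, h⟩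
    · rintro ⟨j, hj, h⟩
      rcases Nat.lt_succ_iff_lt_or_eq.mp hj with h' | rfl
      · exact Or.inl ⟨j, h', h⟩
      · exact Or.inr h

theorem aux_remaining (G : SimpleGraph V) [DecidableRel G.Adj] (hG : G.IsTree) (r : ℕ)
    (hr : IsLastIndex G r) : remaining G r = layer G r := by
  have h0 : remaining G (r+1) = ∅ := by
    apply aux_empty G hG
    intro v hv
    by_contra hc
    have : v ∈ layer G (r+1) := by
      rw [layer, Finset.mem_filter]
      exact ⟨hv, not_lt.mp hc⟩
    rw [hr.2 (r+1) (by omega)] at this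
    simp at this
  ext v
  constructor
  · intro hv
    rw [layer, Finset.mem_filter]
    refine ⟨hv, ?_⟩
    by_contra hc
    have : v ∈ remaining G (r+1) := by
      rw [remaining, Finset.mem_filter]
      exact ⟨hv, not_le.mp hc⟩
    rw [h0] at this
    simp at this
  · intro hv
    exact (Finset.mem_filter.mp hv).1

theorem aux_comp (G : SimpleGraph V) (a b : V) (hne : a ≠ b)
    (hb : ¬ (G.deleteEdges {s(a, b)}).Reachable a b) :
    {w | (G.deleteEdges {s(a, b)}).Reachable w a} = {u | reachIn G {x | x ≠ b} a u} := by
  ext w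
  simp only [Set.mem_ofPred_eq]
  constructor
  · intro h
    obtain ⟨p⟩ := h.symm
    have hs : ∀ x ∈ p.support, x ≠ b := by
      rintro x hx rfl
      exact hb ⟨p.takeUntil x hx⟩
    refine ⟨hne, hs w p.end_mem_support, ?_⟩
    have h2 : ((G.deleteEdges {s(a, b)}).induce {x | x ≠ b}).Reachable
      ⟨a, hne⟩ ⟨w, hs w p.end_mem_support⟩ := ⟨p.induce {x | x ≠ b} hs⟩
    refine h2.mono ?_
    intro x y hxy
    have h3 : (G.deleteEdges {s(a, b)}).Adj x y := hxy
    exact (SimpleGraph.deleteEdges_adj.mp h3).1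
  · rintro ⟨ha, hw, h⟩
    let f : G.induce {x | x ≠ b} →g G.deleteEdges {s(a, b)} :=
      ⟨Subtype.val, by
        rintro ⟨x, hx⟩ ⟨y, hy⟩ hxy
        rw [SimpleGraph.deleteEdges_adj]
        refine ⟨hxy, ?_⟩
        simp only [Set.mem_singleton_iff, Sym2.eq_iff]
        rintro (⟨_, h⟩ | ⟨h, _⟩)
        · exact hy h
        · exact hx h⟩
    exact (h.map f).symm

theorem aux_cover (G : SimpleGraph V) (hG : G.IsTree) (a b w : V) :
    (G.deleteEdges {s(a, b)}).Reachable w a ∨ (G.deleteEdges {s(a, b)}).Reachable w b := by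
  obtain ⟨p⟩ := hG.connected w a
  induction p with
  | nil => exact Or.inl (SimpleGraph.Reachable.refl _)
  | @cons u v c h p ih =>
    by_cases he : s(u, v) = s(c, b)
    · rw [Sym2.eq_iff] at he
      rcases he with ⟨rfl, _⟩ | ⟨rfl, _⟩
      · exact Or.inl (SimpleGraph.Reachable.refl _)
      · exact Or.inr (SimpleGraph.Reachable.refl _)
    · have h2 : (G.deleteEdges {s(c, b)}).Adj u v := by
        rw [SimpleGraph.deleteEdges_adj]
        exact ⟨h, he⟩
      exact ih.imp h2.reachable.trans h2.reachable.trans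

theorem aux_iso (G : SimpleGraph V) (A A' B B' : Set V) (hA : A = A') (hB : B = B') (a b : V)
    (ha : a ∈ A) (ha' : a ∈ A') (h : ∃ ψ : G.induce A ≃g G.induce B, (ψ ⟨a, ha⟩ : V) = b) :
    ∃ ψ : G.induce A' ≃g G.induce B', (ψ ⟨a, ha'⟩ : V) = b := by
  subst hA hB
  exact h

/-- In a finite tree of odd diameter with last layer
`V_r = {l₁, l₂}`: `e = {l₁, l₂}` is an edge of `G`; `G - e` has exactly two
connected components, whose vertex sets are those of `T^{l₁}` and `T^{l₂}`;
and if `G` is not symmetric about any edge, then there is no isomorphism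
from the component of `l₁` to that of `l₂` mapping `l₁` to `l₂`; in
particular `T^{l₁}` and `T^{l₂}` are not isomorphic as rooted trees. -/
theorem odd_diameter_asymmetric (G : SimpleGraph V) [DecidableRel G.Adj]
    [Nonempty V] (hG : G.IsTree) (hodd : Odd (diam G))
    (r : ℕ) (hr : IsLastIndex G r)
    (l₁ l₂ : V) (hne : l₁ ≠ l₂) (hlayer : layer G r = {l₁, l₂}) :
    G.Adj l₁ l₂ ∧
    ¬ (G.deleteEdges {s(l₁, l₂)}).Reachable l₁ l₂ ∧
    (∀ w : V, (G.deleteEdges {s(l₁, l₂)}).Reachable w l₁ ∨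
      (G.deleteEdges {s(l₁, l₂)}).Reachable w l₂) ∧
    {w | (G.deleteEdges {s(l₁, l₂)}).Reachable w l₁} = subtreeVerts G r l₁ ∧
    {w | (G.deleteEdges {s(l₁, l₂)}).Reachable w l₂} = subtreeVerts G r l₂ ∧
    (¬ SymmetricAboutEdge G →
      (¬ ∃ φ : G.induce {w | (G.deleteEdges {s(l₁, l₂)}).Reachable w l₁} ≃g
              G.induce {w | (G.deleteEdges {s(l₁, l₂)}).Reachable w l₂},
        (φ ⟨l₁, SimpleGraph.Reachable.refl l₁⟩ : V) = l₂) ∧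
      (¬ ∃ ψ : G.induce (subtreeVerts G r l₁) ≃g
              G.induce (subtreeVerts G r l₂),
        (ψ ⟨l₁, ⟨Set.mem_insert _ _, Set.mem_insert _ _,
          SimpleGraph.Reachable.refl _⟩⟩ : V) = l₂)) := by
  have hR : remaining G r = {l₁, l₂} := (aux_remaining G hG r hr).trans hlayer
  have hadj : G.Adj l₁ l₂ := by
    obtain ⟨p, hp, -⟩ := hG.existsUnique_path l₁ l₂
    have hs := aux_path G r l₁ (by simp [hR]) l₂ (by simp [hR]) p hp
    cases p with
    | nil => exact absurd rfl hne
    | @cons _ v _ h q =>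
      have hv := hs v (by simp)
      rw [hR, Finset.mem_insert, Finset.mem_singleton] at hv
      rcases hv with rfl | rfl
      · exact absurd rfl h.ne
      · exact h
  have hbr : ¬ (G.deleteEdges {s(l₁, l₂)}).Reachable l₁ l₂ :=
    SimpleGraph.isBridge_iff.mp
      (SimpleGraph.isAcyclic_iff_forall_isBridge.mp hG.isAcyclic
        ((SimpleGraph.mem_edgeSet G).mpr hadj))
  have hlow : ∀ u, (∃ j, j < r ∧ u ∈ layer G j) ↔ ¬ (u = l₁ ∨ u = l₂) := by
    intro u
    rw [← aux_mem, hR, Finset.mem_insert, Finset.mem_singleton]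
  have hs1 : subSet G r l₁ = {x | x ≠ l₂} := by
    ext u
    simp only [subSet, Set.mem_insert_iff, Set.mem_ofPred_eq, hlow]
    grind
  have hs2 : subSet G r l₂ = {x | x ≠ l₁} := by
    ext u
    simp only [subSet, Set.mem_insert_iff, Set.mem_ofPred_eq, hlow]
    grind
  have hc1 : {w | (G.deleteEdges {s(l₁, l₂)}).Reachable w l₁} = subtreeVerts G r l₁ := by
    rw [aux_comp G l₁ l₂ hne hbr, subtreeVerts, hs1]
  have hc2 : {w | (G.deleteEdges {s(l₁, l₂)}).Reachable w l₂} = subtreeVerts G r l₂ := by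
    have h := aux_comp G l₂ l₁ hne.symm (by
      rw [Sym2.eq_swap]
      exact fun h => hbr h.symm)
    rw [subtreeVerts, hs2, ← h, Sym2.eq_swap]
  have hcov := aux_cover G hG l₁ l₂
  refine ⟨hadj, hbr, hcov, hc1, hc2, fun hsym => ?_⟩
  have h1 : ¬ ∃ φ : G.induce {w | (G.deleteEdges {s(l₁, l₂)}).Reachable w l₁} ≃g
              G.induce {w | (G.deleteEdges {s(l₁, l₂)}).Reachable w l₂},
        (φ ⟨l₁, SimpleGraph.Reachable.refl l₁⟩ : V) = l₂ :=
    fun h => hsym ⟨l₁, l₂, hadj, hbr, hcov, h⟩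
  exact ⟨h1, fun h => h1 (aux_iso G _ _ _ _ hc1.symm hc2.symm l₁ l₂ _ _ h)⟩
end

section
/- Let f, g : ℕ → ℝ be nondecreasing functions taking values in [0, 1] such that f(c) + g(c) ≤ 1 for every c ∈ ℕ. Let Q : ℕ × ℕ → ℝ be a nonnegative weight function with Σ_{(a,b) ∈ ℕ × ℕ} Q(a, b) ≤ 1. Then Σ_{(a,b) ∈ ℕ × ℕ} Q(a, b) · ( f(a)·g(b) + g(a)·f(b) ) ≤ 1/2. -/
/-- Let `f, g : ℕ → ℝ` be nondecreasing `[0, 1]`-valued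
functions with `f c + g c ≤ 1` for every `c`, and let `Q : ℕ × ℕ → ℝ` be a
nonnegative (summable) weight function whose total mass is at most `1`.
Then the `Q`-weighted sum of `f a * g b + g a * f b` is at most `1 / 2`. -/
theorem weighted_leader_prob_le_half (f g : ℕ → ℝ)
    (hf : Monotone f) (hg : Monotone g)
    (hf01 : ∀ c, f c ∈ Set.Icc (0 : ℝ) 1)
    (hg01 : ∀ c, g c ∈ Set.Icc (0 : ℝ) 1)
    (hsum : ∀ c, f c + g c ≤ 1)
    (Q : ℕ × ℕ → ℝ) (hQ0 : ∀ p, 0 ≤ Q p)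
    (hQsummable : Summable Q) (hQ1 : ∑' p, Q p ≤ 1) :
    ∑' p : ℕ × ℕ, Q p * (f p.1 * g p.2 + g p.1 * f p.2) ≤ 1 / 2 := by
  have key : ∀ p : ℕ × ℕ, f p.1 * g p.2 + g p.1 * f p.2 ≤ 1 / 2 := by
    intro p
    have h1 : f p.1 ≤ f (max p.1 p.2) := hf (le_max_left _ _)
    have h2 : f p.2 ≤ f (max p.1 p.2) := hf (le_max_right _ _)
    have h3 : g p.1 ≤ g (max p.1 p.2) := hg (le_max_left _ _)
    have h4 : g p.2 ≤ g (max p.1 p.2) := hg (le_max_right _ _)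
    have hs := hsum (max p.1 p.2)
    have hf0 := (hf01 (max p.1 p.2)).1
    have hg0 := (hg01 (max p.1 p.2)).1
    have e1 := mul_le_mul h1 h4 (hg01 p.2).1 hf0
    have e2 := mul_le_mul h3 h2 (hf01 p.2).1 hg0
    nlinarith [sq_nonneg (f (max p.1 p.2) - g (max p.1 p.2))]
  have nn : ∀ p : ℕ × ℕ, 0 ≤ f p.1 * g p.2 + g p.1 * f p.2 := fun p =>
    add_nonneg (mul_nonneg (hf01 _).1 (hg01 _).1) (mul_nonneg (hg01 _).1 (hf01 _).1)
  have le : ∀ p : ℕ × ℕ, Q p * (f p.1 * g p.2 + g p.1 * f p.2) ≤ Q p * (1 / 2) :=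
    fun p => mul_le_mul_of_nonneg_left (key p) (hQ0 p)
  have hS : Summable fun p => Q p * (1 / 2 : ℝ) := hQsummable.mul_right _
  have hS' : Summable fun p : ℕ × ℕ => Q p * (f p.1 * g p.2 + g p.1 * f p.2) :=
    Summable.of_nonneg_of_le (fun p => mul_nonneg (hQ0 p) (nn p)) le hS
  have h := hS'.tsum_le_tsum le hS
  rw [tsum_mul_right] at h
  linarith
end
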